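/- arXiv:2507.07696 — 5 statements merged into one kernel-verified Lean document; each statement's English description precedes it below -/
import Mathlib

section
/- Let X : ℝ³ → ℝ³ (i.e. EuclideanSpace ℝ (Fin 3) → EuclideanSpace ℝ (Fin 3)) be a C² map such that for every point x the derivative fderiv ℝ X x is self-adjoint and has trace zero. Then for every viscosity ν ≥ 0, the pair (X, p) with pressure p = −(1/2)‖X‖² is a stationary solution of the incompressible Navier–Stokes equations on Euclidean ℝ³: for every x, (fderiv ℝ X x)(X x) − ν · (Δ X)(x) = −(grad p)(x), where Δ X is the componentwise Laplacian of X, and the divergence of X vanishes identically. -/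
/-!
The hypothesis that `DX` is self-adjoint says `∂ⱼ Xᵢ = ∂ᵢ Xⱼ`, so that `X` is locally a gradient, and
the hypothesis on the trace says `∑ⱼ ∂ⱼ Xⱼ = 0`. Two classical consequences give the theorem.

* `Xᵢ` is harmonic (`sum_fderiv_fderiv_single_eq_zero`): since second derivatives commute,
  `∑ⱼ ∂ⱼ∂ⱼ Xᵢ = ∑ⱼ ∂ⱼ∂ᵢ Xⱼ = ∂ᵢ (∑ⱼ ∂ⱼ Xⱼ) = 0`, so the viscous term vanishes for every `ν`.
* The advective term is a gradient (`gradient_neg_half_norm_sq_apply`):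
  `∂ᵢ (½‖X‖²) = ⟪X, DX eᵢ⟫ = ⟪DX X, eᵢ⟫ = (DX X)ᵢ`.
-/

open scoped RealInnerProductSpace

open EuclideanSpace in
/-- The components of a `C²` field whose derivative is self-adjoint and trace-free are harmonic. -/
theorem sum_fderiv_fderiv_single_eq_zero
    {X : EuclideanSpace ℝ (Fin 3) → EuclideanSpace ℝ (Fin 3)} (hX : ContDiff ℝ 2 X)
    (hsa : ∀ x u v : EuclideanSpace ℝ (Fin 3),
      ⟪(fderiv ℝ X x) u, v⟫ = ⟪(fderiv ℝ X x) v, u⟫)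
    (htr : ∀ x : EuclideanSpace ℝ (Fin 3),
      LinearMap.trace ℝ (EuclideanSpace ℝ (Fin 3)) (fderiv ℝ X x).toLinearMap = 0)
    (x : EuclideanSpace ℝ (Fin 3)) (i : Fin 3) :
    ∑ j : Fin 3, fderiv ℝ (fun y => fderiv ℝ (fun z => X z i) y (single j (1 : ℝ))) x
      (single j (1 : ℝ)) = 0 := by
  have hd : Differentiable ℝ X := hX.differentiable (by norm_num)
  have hd' : Differentiable ℝ (fderiv ℝ X) :=
    (hX.fderiv_right (m := 1) (by norm_num)).differentiable (by norm_num)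
  have hcomp (k : Fin 3) (y v : EuclideanSpace ℝ (Fin 3)) :
      fderiv ℝ (fun z => X z k) y v = (fderiv ℝ X y v) k := by
    have h := ((proj k : EuclideanSpace ℝ (Fin 3) →L[ℝ] ℝ).hasFDerivAt.comp y
      (hd y).hasFDerivAt).fderiv
    exact congrArg (fun L : EuclideanSpace ℝ (Fin 3) →L[ℝ] ℝ => L v) h
  have hsnd (k : Fin 3) (u : EuclideanSpace ℝ (Fin 3)) :
      HasFDerivAt (fun y => (fderiv ℝ X y u) k)
        ((proj k : EuclideanSpace ℝ (Fin 3) →L[ℝ] ℝ) ∘L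
          (fderiv ℝ (fderiv ℝ X) x).flip u) x :=
    (proj k : EuclideanSpace ℝ (Fin 3) →L[ℝ] ℝ).hasFDerivAt.comp x
      (((ContinuousLinearMap.apply ℝ (EuclideanSpace ℝ (Fin 3)) u).hasFDerivAt).comp x
        (hd' x).hasFDerivAt)
  have hsymm (j k : Fin 3) (y : EuclideanSpace ℝ (Fin 3)) :
      (fderiv ℝ X y (single j 1)) k = (fderiv ℝ X y (single k 1)) j := by
    simpa [inner_single_right] using hsa y (single j 1) (single k 1)
  have htrace (y : EuclideanSpace ℝ (Fin 3)) :
      ∑ j : Fin 3, (fderiv ℝ X y (single j 1)) j = 0 := by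
    have h := htr y
    rw [LinearMap.trace_eq_sum_inner _ (basisFun (Fin 3) ℝ)] at h
    simpa [inner_single_left] using h
  have hcommute := hX.contDiffAt.isSymmSndFDerivAt (x := x) (by simp)
  calc
    _ = ∑ j : Fin 3, (fderiv ℝ (fderiv ℝ X) x (single i 1) (single j 1)) j := by
      refine Finset.sum_congr rfl fun j _ => ?_
      simp only [hcomp, hsymm j i]
      rw [(hsnd j (single i 1)).fderiv, ← hcommute.eq]
      rfl
    _ = fderiv ℝ (fun y => ∑ j : Fin 3, (fderiv ℝ X y (single j 1)) j) x (single i 1) := by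
      rw [(HasFDerivAt.fun_sum fun j _ => hsnd j (single j 1)).fderiv]
      simp
    _ = 0 := by simp [htrace]

theorem gradient_neg_half_norm_sq_apply
    {X : EuclideanSpace ℝ (Fin 3) → EuclideanSpace ℝ (Fin 3)} (hd : Differentiable ℝ X)
    (hsa : ∀ x u v : EuclideanSpace ℝ (Fin 3),
      ⟪(fderiv ℝ X x) u, v⟫ = ⟪(fderiv ℝ X x) v, u⟫)
    (x : EuclideanSpace ℝ (Fin 3)) (i : Fin 3) :
    gradient (fun y => -((1 / 2 : ℝ) * ‖X y‖ ^ 2)) x i = -(fderiv ℝ X x (X x)) i := by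
  have hp := (((hd x).hasFDerivAt.norm_sq).const_mul (1 / 2 : ℝ)).fun_neg
  have hcoord : gradient (fun y => -((1 / 2 : ℝ) * ‖X y‖ ^ 2)) x i =
      ⟪gradient (fun y => -((1 / 2 : ℝ) * ‖X y‖ ^ 2)) x, EuclideanSpace.single i 1⟫ := by
    rw [EuclideanSpace.inner_single_right]; simp only [one_mul, conj_trivial]
  have h := hsa x (X x) (EuclideanSpace.single i 1)
  rw [real_inner_comm (X x)] at h
  rw [hcoord, gradient, InnerProductSpace.toDual_symm_apply, hp.fderiv]
  simpa [EuclideanSpace.inner_single_right] using h.symm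

/-- If `X : ℝ³ → ℝ³` is `C²` with everywhere self-adjoint and trace-free
derivative (a harmonic vector field for the Euclidean metric), then for every viscosity
`ν ≥ 0` the pair `(X, p)` with `p = -(1/2)‖X‖²` is a stationary solution of the
incompressible Navier–Stokes equations: componentwise,
`(fderiv ℝ X x) (X x) - ν • ΔX x = - grad p x`, where `ΔX` is the componentwise
Laplacian, and the divergence (trace of the derivative) of `X` vanishes identically. -/
theorem harmonic_vector_field_stationary_navier_stokes
    (X : EuclideanSpace ℝ (Fin 3) → EuclideanSpace ℝ (Fin 3))
    (hX : ContDiff ℝ 2 X)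
    (hsa : ∀ (x : EuclideanSpace ℝ (Fin 3)) (u v : EuclideanSpace ℝ (Fin 3)),
      ⟪(fderiv ℝ X x) u, v⟫ = ⟪(fderiv ℝ X x) v, u⟫)
    (htr : ∀ x : EuclideanSpace ℝ (Fin 3),
      LinearMap.trace ℝ (EuclideanSpace ℝ (Fin 3)) (fderiv ℝ X x).toLinearMap = 0)
    (ν : ℝ) (hν : 0 ≤ ν) :
    (∀ (x : EuclideanSpace ℝ (Fin 3)) (i : Fin 3),
      (fderiv ℝ X x) (X x) i
        - ν * (∑ j : Fin 3,
            fderiv ℝ (fun y => fderiv ℝ (fun z => X z i) y (EuclideanSpace.single j (1 : ℝ))) x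
              (EuclideanSpace.single j (1 : ℝ)))
        = -(gradient (fun y => -((1 / 2 : ℝ) * ‖X y‖ ^ 2)) x) i) ∧
    (∀ x : EuclideanSpace ℝ (Fin 3),
      LinearMap.trace ℝ (EuclideanSpace ℝ (Fin 3)) (fderiv ℝ X x).toLinearMap = 0) := by
  refine ⟨fun x i => ?_, htr⟩
  rw [sum_fderiv_fderiv_single_eq_zero hX hsa htr,
    gradient_neg_half_norm_sq_apply (hX.differentiable (by norm_num)) hsa]
  ring
end

section
/- Let g : (ℝ² × ℝ) → ℝ be continuously differentiable with g(q, t + 1) = g(q, t) for all (q, t), and let c > 0 be a constant with c + ∂g/∂t (q, t) > 0 for every (q, t). Define G : ℝ² × ℝ → ℝ² × ℝ by G(q, t) = (q, t + c⁻¹ g(q, t)). Then G satisfies the equivariance G(q, t + 1) = G(q, t) + (0, 1) for all (q, t), and the Fréchet derivative of G is invertible at every point; in particular G is a local diffeomorphism. -/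
/-!
Equivariance is immediate from the periodicity of `g`. With `L = Dg(p)`, the derivative of
`G (q, t) = (q, t + c⁻¹ g (q, t))` at `p` is `(v, s) ↦ (v, s + c⁻¹ L (v, s))`. A vector in its
kernel has `v = 0`, and then `s (1 + c⁻¹ L (0, 1)) = 0`; since `c + L (0, 1) > 0`, also `s = 0`.
An injective endomorphism of a finite-dimensional space is a linear equivalence, automatically
continuous in both directions.
-/

/-- Let `g : ℝ² × ℝ → ℝ` be `C¹` and 1-periodic in the last variable, and let
`c > 0` satisfy `c + ∂g/∂t > 0` everywhere. Then `G (q, t) = (q, t + c⁻¹ g (q, t))` is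
equivariant, `G (q, t + 1) = G (q, t) + (0, 1)`, and its Fréchet derivative is invertible
at every point (so `G` is a local diffeomorphism). -/
theorem reparametrization_equivariant_and_local_diffeo
    (g : EuclideanSpace ℝ (Fin 2) × ℝ → ℝ) (hg : ContDiff ℝ 1 g)
    (hper : ∀ (q : EuclideanSpace ℝ (Fin 2)) (t : ℝ), g (q, t + 1) = g (q, t))
    (c : ℝ) (hc : 0 < c)
    (hpos : ∀ (q : EuclideanSpace ℝ (Fin 2)) (t : ℝ),
      0 < c + fderiv ℝ g (q, t) ((0 : EuclideanSpace ℝ (Fin 2)), (1 : ℝ))) :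
    (∀ (q : EuclideanSpace ℝ (Fin 2)) (t : ℝ),
      (fun p : EuclideanSpace ℝ (Fin 2) × ℝ => (p.1, p.2 + c⁻¹ * g p)) (q, t + 1)
        = (fun p : EuclideanSpace ℝ (Fin 2) × ℝ => (p.1, p.2 + c⁻¹ * g p)) (q, t)
          + ((0 : EuclideanSpace ℝ (Fin 2)), (1 : ℝ))) ∧
    (∀ p : EuclideanSpace ℝ (Fin 2) × ℝ,
      ∃ A : (EuclideanSpace ℝ (Fin 2) × ℝ) ≃L[ℝ] (EuclideanSpace ℝ (Fin 2) × ℝ),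
        (A : (EuclideanSpace ℝ (Fin 2) × ℝ) →L[ℝ] (EuclideanSpace ℝ (Fin 2) × ℝ))
          = fderiv ℝ (fun p : EuclideanSpace ℝ (Fin 2) × ℝ => (p.1, p.2 + c⁻¹ * g p)) p) := by
  refine ⟨fun q t => ?_, fun p => ?_⟩
  · ext1
    · simp
    · simp only [hper, Prod.snd_add]
      ring
  · set L := fderiv ℝ g p with hL
    have hgp : HasFDerivAt g L p := (hg.differentiable one_ne_zero p).hasFDerivAt
    have hG : HasFDerivAt (fun p : EuclideanSpace ℝ (Fin 2) × ℝ => (p.1, p.2 + c⁻¹ * g p))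
        ((ContinuousLinearMap.fst ℝ (EuclideanSpace ℝ (Fin 2)) ℝ).prod
          (ContinuousLinearMap.snd ℝ (EuclideanSpace ℝ (Fin 2)) ℝ + c⁻¹ • L)) p :=
      hasFDerivAt_fst.prodMk (hasFDerivAt_snd.add (hgp.const_mul c⁻¹))
    rw [hG.fderiv]
    set D := (ContinuousLinearMap.fst ℝ (EuclideanSpace ℝ (Fin 2)) ℝ).prod
          (ContinuousLinearMap.snd ℝ (EuclideanSpace ℝ (Fin 2)) ℝ + c⁻¹ • L) with hD
    have hinj : Function.Injective D.toLinearMap := by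
      rw [injective_iff_map_eq_zero]
      rintro ⟨v, s⟩ h
      obtain ⟨rfl, h2⟩ : v = 0 ∧ s + c⁻¹ * L (v, s) = 0 := by
        simpa [hD, Prod.ext_iff] using h
      have hs : L ((0 : EuclideanSpace ℝ (Fin 2)), s)
          = s * L ((0 : EuclideanSpace ℝ (Fin 2)), (1 : ℝ)) := by
        rw [← smul_eq_mul, ← map_smul]
        simp
      rw [hs] at h2
      have h3 : s * (c + L ((0 : EuclideanSpace ℝ (Fin 2)), (1 : ℝ))) = 0 := by
        field_simp at h2
        linarith
      have hs0 : s = 0 := (mul_eq_zero.mp h3).resolve_right (hpos p.1 p.2).ne'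
      simp [hs0]
    refine ⟨(LinearEquiv.ofInjectiveEndo _ hinj).toContinuousLinearEquiv, ?_⟩
    refine ContinuousLinearMap.ext fun x => ?_
    rfl
end

section
/- Let D ⊆ ℝ² be the closed unit disk, let g : (ℝ² × ℝ) → ℝ be continuously differentiable with g(q, t + 1) = g(q, t) for all (q, t), and let c > 0 be a constant with c + ∂g/∂t (q, t) > 0 for every (q, t). Define G(q, t) = (q, t + c⁻¹ g(q, t)). Then G restricts to a bijection of D × ℝ onto itself, and the induced map on D × AddCircle (1 : ℝ), sending (q, ⟦t⟧) to (q, ⟦t + c⁻¹ g(q, t)⟧), is well defined and is a bijection of D × AddCircle (1 : ℝ). -/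
/-!
For fixed `q`, the fibre map `φ t = t + c⁻¹ g (q, t)` has derivative `c⁻¹ (c + ∂g/∂t) > 0` and
satisfies `φ (t + 1) = φ t + 1`. It is therefore a strictly increasing continuous lift of a
degree one circle map (`fibreLift`), which tends to `±∞` at `±∞`, so it is a bijection of `ℝ`.
Such a lift commutes with integer translations, so it descends to `ℝ/ℤ`; if `φ t = φ s + n` with
`n` an integer, then `φ t = φ (s + n)` and `t = s + n`, which gives injectivity of the quotient map.
Since `G` and the induced map preserve the base point `q`, both statements follow fibre by fibre.
-/

theorem fibre_strictMono {E : Type*} [NormedAddCommGroup E] [NormedSpace ℝ E]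
    {g : E × ℝ → ℝ} (hg : ContDiff ℝ 1 g) {c : ℝ} (hc : 0 < c) (q : E)
    (hpos : ∀ t : ℝ, 0 < c + fderiv ℝ g (q, t) ((0 : E), (1 : ℝ))) :
    StrictMono fun t : ℝ => t + c⁻¹ * g (q, t) := by
  refine strictMono_of_hasDerivAt_pos
    (f' := fun t => 1 + c⁻¹ * fderiv ℝ g (q, t) ((0 : E), (1 : ℝ))) (fun t => ?_) (fun t => ?_)
  · have hline : HasDerivAt (fun t : ℝ => (q, t)) ((0 : E), (1 : ℝ)) t :=
      (hasDerivAt_const t q).prodMk (hasDerivAt_id t)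
    have hgt : HasFDerivAt g (fderiv ℝ g (q, t)) (q, t) :=
      (hg.differentiable one_ne_zero (q, t)).hasFDerivAt
    exact (hasDerivAt_id t).add ((hgt.comp_hasDerivAt t hline).const_mul c⁻¹)
  · have h := mul_pos (inv_pos.2 hc) (hpos t)
    rwa [mul_add, inv_mul_cancel₀ hc.ne'] at h

/-- The fibre map `t ↦ t + c⁻¹ g (q, t)` as a lift of a degree one circle map. -/
noncomputable def fibreLift {E : Type*} (g : E × ℝ → ℝ) (c : ℝ) (q : E)
    (hper : ∀ t : ℝ, g (q, t + 1) = g (q, t))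
    (hmono : StrictMono fun t : ℝ => t + c⁻¹ * g (q, t)) : CircleDeg1Lift where
  toFun t := t + c⁻¹ * g (q, t)
  monotone' := hmono.monotone
  map_add_one' t := by rw [hper]; ring

/-- The map of `ℝ/ℤ` induced by a lift of a degree one circle map. -/
noncomputable def CircleDeg1Lift.descend (f : CircleDeg1Lift) : AddCircle (1 : ℝ) → AddCircle (1 : ℝ) :=
  Function.Periodic.lift (f := fun t : ℝ => ((f t : ℝ) : AddCircle (1 : ℝ))) (c := 1) fun t => by
    simp only [f.map_add_one, AddCircle.coe_add, AddCircle.coe_period, add_zero]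

theorem CircleDeg1Lift.descend_coe (f : CircleDeg1Lift) (t : ℝ) :
    f.descend (t : AddCircle (1 : ℝ)) = ((f t : ℝ) : AddCircle (1 : ℝ)) :=
  Function.Periodic.lift_coe _ t

theorem CircleDeg1Lift.descend_bijective (f : CircleDeg1Lift) (hf : Function.Bijective f) :
    Function.Bijective f.descend := by
  constructor
  · intro x y hxy
    induction x using QuotientAddGroup.induction_on with | _ t
    induction y using QuotientAddGroup.induction_on with | _ s
    have h : ((f t : ℝ) : AddCircle (1 : ℝ)) = (f s : ℝ) := by
      rw [← f.descend_coe, ← f.descend_coe]; exact hxy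
    rw [← sub_eq_zero, ← AddCircle.coe_sub, AddCircle.coe_eq_zero_iff] at h
    obtain ⟨n, hn⟩ := h
    rw [zsmul_one] at hn
    have hts : t = s + n := hf.1 (by rw [f.map_add_int]; linarith)
    change (t : AddCircle (1 : ℝ)) = (s : AddCircle (1 : ℝ))
    rw [← sub_eq_zero, ← AddCircle.coe_sub, AddCircle.coe_eq_zero_iff]
    exact ⟨n, by rw [zsmul_one]; linarith⟩
  · intro y
    induction y using QuotientAddGroup.induction_on with | _ s
    obtain ⟨t, rfl⟩ := hf.2 s
    exact ⟨t, f.descend_coe t⟩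


/-- Let `D` be the closed unit disk in `ℝ²`, `g : ℝ² × ℝ → ℝ` a `C¹` function,
1-periodic in the last variable, and `c > 0` with `c + ∂g/∂t > 0` everywhere. Then
`G (q, t) = (q, t + c⁻¹ g (q, t))` restricts to a bijection of `D × ℝ` onto itself, and
it descends to a well-defined bijection of `D × AddCircle (1 : ℝ)` sending `(q, ⟦t⟧)` to
`(q, ⟦t + c⁻¹ g (q, t)⟧)`. -/
theorem reparametrization_bijection_solid_torus
    (g : EuclideanSpace ℝ (Fin 2) × ℝ → ℝ) (hg : ContDiff ℝ 1 g)
    (hper : ∀ (q : EuclideanSpace ℝ (Fin 2)) (t : ℝ), g (q, t + 1) = g (q, t))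
    (c : ℝ) (hc : 0 < c)
    (hpos : ∀ (q : EuclideanSpace ℝ (Fin 2)) (t : ℝ),
      0 < c + fderiv ℝ g (q, t) ((0 : EuclideanSpace ℝ (Fin 2)), (1 : ℝ))) :
    Set.BijOn (fun p : EuclideanSpace ℝ (Fin 2) × ℝ => (p.1, p.2 + c⁻¹ * g p))
      ((Metric.closedBall (0 : EuclideanSpace ℝ (Fin 2)) 1) ×ˢ (Set.univ : Set ℝ))
      ((Metric.closedBall (0 : EuclideanSpace ℝ (Fin 2)) 1) ×ˢ (Set.univ : Set ℝ)) ∧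
    ∃ H : (Metric.closedBall (0 : EuclideanSpace ℝ (Fin 2)) 1) × AddCircle (1 : ℝ) →
          (Metric.closedBall (0 : EuclideanSpace ℝ (Fin 2)) 1) × AddCircle (1 : ℝ),
      (∀ (q : Metric.closedBall (0 : EuclideanSpace ℝ (Fin 2)) 1) (t : ℝ),
        H (q, (t : AddCircle (1 : ℝ)))
          = (q, ((t + c⁻¹ * g ((q : EuclideanSpace ℝ (Fin 2)), t) : ℝ) : AddCircle (1 : ℝ)))) ∧
      Function.Bijective H := by
  have hmono q := fibre_strictMono hg hc q (hpos q)
  let φ (q : EuclideanSpace ℝ (Fin 2)) : CircleDeg1Lift := fibreLift g c q (hper q) (hmono q)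
  have hbij (q) : Function.Bijective (φ q) := by
    have hgc := hg.continuous
    have hcont : Continuous (φ q) := by
      change Continuous fun t : ℝ => t + c⁻¹ * g (q, t)
      fun_prop
    exact ⟨(hmono q).injective, hcont.surjective (φ q).tendsto_atTop (φ q).tendsto_atBot⟩
  refine ⟨⟨fun p hp => ⟨hp.1, trivial⟩, ?_, ?_⟩,
    fun p => (p.1, (φ p.1).descend p.2), fun q t => ?_, ?_, ?_⟩
  · rintro ⟨q, t⟩ - ⟨q', t'⟩ - h
    obtain ⟨rfl, h⟩ := Prod.mk.inj h
    exact Prod.ext rfl ((hbij q).1 h)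
  · rintro ⟨q, s⟩ ⟨hq, -⟩
    obtain ⟨t, ht⟩ := (hbij q).2 s
    exact ⟨(q, t), ⟨hq, trivial⟩, Prod.ext rfl ht⟩
  · exact Prod.ext rfl ((φ q).descend_coe t)
  · rintro ⟨q, x⟩ ⟨q', x'⟩ h
    obtain ⟨rfl, h⟩ := Prod.mk.inj h
    exact Prod.ext rfl (((φ q).descend_bijective (hbij q)).1 h)
  · rintro ⟨q, y⟩
    obtain ⟨x, hx⟩ := ((φ q).descend_bijective (hbij q)).2 y
    exact ⟨(q, x), Prod.ext rfl hx⟩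
end

section
/- Let B ⊆ ℝ² be an open ball and let U = B × ℝ ⊆ ℝ² × ℝ (a convex open set). Let α : U → ((ℝ² × ℝ) →L[ℝ] ℝ) be a smooth 1-form which is closed, i.e. the bilinear map (u, v) ↦ (fderiv ℝ α x u) v is symmetric at every x ∈ U, and periodic in the last variable: α(q, t + 1) = α(q, t) for all (q, t) ∈ U. Then there exist a constant c ∈ ℝ and a smooth function g : U → ℝ with g(q, t + 1) = g(q, t) for all (q, t) ∈ U such that α(q, t) = c · π_t + fderiv ℝ g (q, t) for all (q, t) ∈ U, where π_t : ℝ² × ℝ → ℝ is the projection onto the last coordinate. -/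
/-!
The set `B × ℝ` is convex, so by the Poincaré lemma
(`Convex.exists_forall_hasFDerivAt_of_fderiv_symmetric`) the closed form `α` has a primitive `f`
there. Periodicity of `α` says that `(q, t) ↦ f (q, t + 1)` is another primitive, so it differs
from `f` by a constant `c`, the period of `α` around the circle. Subtracting `c * t` from `f`
removes this period and leaves a periodic primitive of `α - c dt`.
-/

/-- Let `B ⊆ ℝ²` be an open ball and `U = B × ℝ`. Every smooth closed 1-form
`α` on `U` which is 1-periodic in the last variable can be written as `α = c dt + dg` on `U`,
for some constant `c` and smooth function `g : U → ℝ` which is 1-periodic in the last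
variable. (This is the computation of `H¹` of the solid torus, lifted to the periodic
cover.) -/
theorem closed_one_form_on_solid_torus_cohomologous_to_c_dt
    (x₀ : EuclideanSpace ℝ (Fin 2)) (r : ℝ) (hr : 0 < r)
    (α : EuclideanSpace ℝ (Fin 2) × ℝ → ((EuclideanSpace ℝ (Fin 2) × ℝ) →L[ℝ] ℝ))
    (hα : ContDiffOn ℝ (⊤ : ℕ∞) α ((Metric.ball x₀ r) ×ˢ (Set.univ : Set ℝ)))
    (hclosed : ∀ x ∈ (Metric.ball x₀ r) ×ˢ (Set.univ : Set ℝ),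
      ∀ u v : EuclideanSpace ℝ (Fin 2) × ℝ, (fderiv ℝ α x u) v = (fderiv ℝ α x v) u)
    (hper : ∀ (q : EuclideanSpace ℝ (Fin 2)) (t : ℝ),
      (q, t) ∈ (Metric.ball x₀ r) ×ˢ (Set.univ : Set ℝ) → α (q, t + 1) = α (q, t)) :
    ∃ (c : ℝ) (g : EuclideanSpace ℝ (Fin 2) × ℝ → ℝ),
      ContDiffOn ℝ (⊤ : ℕ∞) g ((Metric.ball x₀ r) ×ˢ (Set.univ : Set ℝ)) ∧
      (∀ (q : EuclideanSpace ℝ (Fin 2)) (t : ℝ),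
        (q, t) ∈ (Metric.ball x₀ r) ×ˢ (Set.univ : Set ℝ) → g (q, t + 1) = g (q, t)) ∧
      (∀ x ∈ (Metric.ball x₀ r) ×ˢ (Set.univ : Set ℝ),
        α x = c • (ContinuousLinearMap.snd ℝ (EuclideanSpace ℝ (Fin 2)) ℝ) + fderiv ℝ g x) := by
  have hUo : IsOpen ((Metric.ball x₀ r) ×ˢ (Set.univ : Set ℝ)) :=
    Metric.isOpen_ball.prod isOpen_univ
  have hUc : Convex ℝ ((Metric.ball x₀ r) ×ˢ (Set.univ : Set ℝ)) :=
    (convex_ball x₀ r).prod convex_univ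
  obtain ⟨f, hf⟩ := hUc.exists_forall_hasFDerivAt_of_fderiv_symmetric hUo
    (hα.differentiableOn (by simp)) hclosed
  have hshift : ∀ x ∈ (Metric.ball x₀ r) ×ˢ (Set.univ : Set ℝ),
      HasFDerivAt (fun y => f (y + (0, 1))) (α x) x := by
    rintro ⟨q, t⟩ hx
    have h := hf ((q, t) + (0, 1)) ⟨by simpa using hx.1, trivial⟩
    have hp : α ((q, t) + (0, 1)) = α (q, t) := by simpa using hper q t hx
    rw [hp] at h
    exact (hasFDerivAt_comp_add_right (0, 1)).2 h
  obtain ⟨c, hc⟩ := hUo.exists_eq_add_of_fderiv_eq hUc.isPreconnected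
    (fun x hx => (hshift x hx).differentiableAt.differentiableWithinAt)
    (fun x hx => (hf x hx).differentiableAt.differentiableWithinAt)
    (fun x hx => (hshift x hx).fderiv.trans (hf x hx).fderiv.symm)
  have hg : ∀ x ∈ (Metric.ball x₀ r) ×ˢ (Set.univ : Set ℝ),
      HasFDerivAt (fun y => f y - c * y.2)
        (α x - c • ContinuousLinearMap.snd ℝ (EuclideanSpace ℝ (Fin 2)) ℝ) x :=
    fun x hx => (hf x hx).sub (hasFDerivAt_snd.const_mul c)
  refine ⟨c, fun y => f y - c * y.2, ?_, ?_, ?_⟩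
  · refine (contDiffOn_infty_iff_fderiv_of_isOpen hUo).2
      ⟨fun x hx => (hg x hx).differentiableAt.differentiableWithinAt, ?_⟩
    exact (hα.sub contDiffOn_const).congr fun x hx => (hg x hx).fderiv
  · intro q t hx
    have h : f (q, t + 1) = f (q, t) + c := by simpa using hc hx
    simp only [h]
    ring
  · intro x hx
    rw [(hg x hx).fderiv]
    abel
end

section
/- Let V be a 3-dimensional real vector space, let α : V → ℝ be a linear functional, and let β be an alternating bilinear form on V such that the alternating 3-form α ∧ β, defined by (x, y, z) ↦ α(x)β(y, z) − α(y)β(x, z) + α(z)β(x, y), is nonzero. Then there exists a unique vector v ∈ V with α(v) = 1 and β(v, w) = 0 for all w ∈ V. -/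
/-!
Fix `x, y, z` with `D = (α ∧ β)(x, y, z) ≠ 0`. If `d = a x + b y + c z` satisfies `α d = 0` and
`β d = 0`, then expanding gives `a D = b D = c D = 0`, so `d = 0`. For `d = 0` this says that
`x, y, z` are linearly independent, hence a basis as `dim V = 3`; applied to the difference of two
Reeb vectors it then gives uniqueness. For existence, the vector
`D⁻¹ (β(y, z) x - β(x, z) y + β(x, y) z)` is annihilated by `β` on the basis, and `α` sends it
to `1`.
-/

/-- A combination of `x, y, z` in `ker α ∩ ker β` has zero coefficients when
`(α ∧ β)(x, y, z) ≠ 0`. -/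
lemma coeffs_eq_zero_of_mem_kernels {V : Type*} [AddCommGroup V] [Module ℝ V]
    (α : V →ₗ[ℝ] ℝ) (β : V →ₗ[ℝ] V →ₗ[ℝ] ℝ) (halt : ∀ x : V, β x x = 0) {x y z : V}
    (hD : α x * β y z - α y * β x z + α z * β x y ≠ 0) {a b c : ℝ}
    (hα : α (a • x + b • y + c • z) = 0)
    (hβ : ∀ w, β (a • x + b • y + c • z) w = 0) : a = 0 ∧ b = 0 ∧ c = 0 := by
  have hneg : ∀ u v, β u v = -β v u := fun u v => (LinearMap.IsAlt.neg halt v u).symm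
  have hx := hβ x
  have hy := hβ y
  have hz := hβ z
  simp only [map_add, map_smul, LinearMap.add_apply, LinearMap.smul_apply, smul_eq_mul,
    halt, hneg y x, hneg z x, hneg z y] at hα hx hy hz
  refine ⟨?_, ?_, ?_⟩ <;> refine (mul_eq_zero.mp ?_).resolve_right hD
  · linear_combination β y z * hα - α y * hz + α z * hy
  · linear_combination -β x z * hα + α x * hz - α z * hx
  · linear_combination β x y * hα - α x * hy + α y * hx

/-- On a 3-dimensional real vector space, a linear functional `α` and an
alternating bilinear form `β` with `α ∧ β ≠ 0` determine a unique Reeb vector: a unique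
`v` with `α v = 1` and `β v — = 0`. -/
theorem existsUnique_reeb_vector_of_wedge_ne_zero
    {V : Type*} [AddCommGroup V] [Module ℝ V] [FiniteDimensional ℝ V]
    (hdim : Module.finrank ℝ V = 3)
    (α : V →ₗ[ℝ] ℝ) (β : V →ₗ[ℝ] V →ₗ[ℝ] ℝ)
    (halt : ∀ x : V, β x x = 0)
    (hwedge : ∃ x y z : V,
      α x * β y z - α y * β x z + α z * β x y ≠ 0) :
    ∃! v : V, α v = 1 ∧ ∀ w : V, β v w = 0 := by
  obtain ⟨x, y, z, hD⟩ := hwedge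
  have hneg : ∀ u v, β u v = -β v u := fun u v => (LinearMap.IsAlt.neg halt v u).symm
  have hli : LinearIndependent ℝ ![x, y, z] := by
    rw [Fintype.linearIndependent_iff]
    intro g hg
    simp only [Fin.sum_univ_three, Matrix.cons_val] at hg
    obtain ⟨h0, h1, h2⟩ := coeffs_eq_zero_of_mem_kernels α β halt hD
      (a := g 0) (b := g 1) (c := g 2) (by rw [hg, map_zero]) (by simp [hg])
    intro i
    fin_cases i <;> assumption
  have hspan : ∀ w : V, ∃ a b c : ℝ, w = a • x + b • y + c • z := fun w => by
    let e := basisOfLinearIndependentOfCardEqFinrank hli (by simp [hdim])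
    refine ⟨e.repr w 0, e.repr w 1, e.repr w 2, ?_⟩
    have h := e.sum_repr w
    simp only [Fin.sum_univ_three, e, coe_basisOfLinearIndependentOfCardEqFinrank,
      Matrix.cons_val] at h
    exact h.symm
  refine existsUnique_of_exists_of_unique
    ⟨(α x * β y z - α y * β x z + α z * β x y)⁻¹ •
      (β y z • x - β x z • y + β x y • z), ?_, fun w => ?_⟩ ?_
  · simp only [map_add, map_sub, map_smul, smul_eq_mul]
    rw [inv_mul_eq_one₀ hD]
    ring
  · obtain ⟨a, b, c, rfl⟩ := hspan w
    simp only [map_add, map_sub, map_smul, LinearMap.add_apply, LinearMap.sub_apply,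
      LinearMap.smul_apply, smul_eq_mul, halt, hneg y x, hneg z x, hneg z y]
    ring
  · rintro u v ⟨hu, hu'⟩ ⟨hv, hv'⟩
    obtain ⟨a, b, c, h⟩ := hspan (u - v)
    obtain ⟨rfl, rfl, rfl⟩ := coeffs_eq_zero_of_mem_kernels α β halt hD
      (a := a) (b := b) (c := c) (by rw [← h, map_sub, hu, hv, sub_self])
      (fun w => by rw [← h, map_sub, LinearMap.sub_apply, hu', hv', sub_self])
    simpa [sub_eq_zero] using h
end
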